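/- For every n ≥ 4 and 3 ≤ k ≤ n−1, there exist two discrete copulas C₁ and C₂ (each corresponding to an n×n permutation matrix) such that for all (r,s) ∈ L_n × L_n, Q(F_n^k)(r,s) = min{C₁(r,s), C₂(r,s)} and Q(F_n^{k−1})(r,s) = max{C₁(r,s), C₂(r,s)}. Consequently, the imprecise copula (Q(F_n^k), Q(F_n^{k−1})) is coherent: for every (r,s) ∈ L_n × L_n, Q(F_n^k)(r,s) is the infimum and Q(F_n^{k−1})(r,s) the supremum of C(r,s) over all discrete copulas C with Q(F_n^k) ≤ C ≤ Q(F_n^{k−1}) pointwise. -/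

import Mathlib

open Finset

/-- An `n×n` matrix encoded as `ℕ → ℕ → ℝ` with indices `1,…,n` and zero entries outside. -/
def IsASM (n : ℕ) (a : ℕ → ℕ → ℝ) : Prop :=
  (∀ i j, ¬(1 ≤ i ∧ i ≤ n ∧ 1 ≤ j ∧ j ≤ n) → a i j = 0) ∧
  (∀ i j, a i j = -1 ∨ a i j = 0 ∨ a i j = 1) ∧
  (∀ i, 1 ≤ i → i ≤ n → ∑ j ∈ Icc 1 n, a i j = 1) ∧
  (∀ j, 1 ≤ j → j ≤ n → ∑ i ∈ Icc 1 n, a i j = 1) ∧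
  (∀ i t, 1 ≤ i → i ≤ n → t ≤ n →
    (∑ j ∈ Icc 1 t, a i j = 0 ∨ ∑ j ∈ Icc 1 t, a i j = 1)) ∧
  (∀ j t, 1 ≤ j → j ≤ n → t ≤ n →
    (∑ i ∈ Icc 1 t, a i j = 0 ∨ ∑ i ∈ Icc 1 t, a i j = 1))

/-- No zero entry lies between two nonzero entries in any row or column. -/
def IsDense (a : ℕ → ℕ → ℝ) : Prop :=
  (∀ i j₁ j₂ j₃, j₁ < j₂ → j₂ < j₃ → a i j₁ ≠ 0 → a i j₃ ≠ 0 → a i j₂ ≠ 0) ∧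
  (∀ j i₁ i₂ i₃, i₁ < i₂ → i₂ < i₃ → a i₁ j ≠ 0 → a i₃ j ≠ 0 → a i₂ j ≠ 0)

/-- A proper ASM contains at least one entry `-1`. -/
def IsProper (a : ℕ → ℕ → ℝ) : Prop := ∃ i j, a i j = -1

/-- The matrix `F_n^k`. -/
noncomputable def Fmat (n k : ℕ) : ℕ → ℕ → ℝ := fun i j =>
  if k + 1 ≤ i + j ∧ (i : ℤ) + j ≤ 2 * n - k + 1 ∧ |(i : ℤ) - j| ≤ (k : ℤ) - 1
  then (-1 : ℝ) ^ (i + j - k - 1) else 0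

/-- The discrete quasi-copula associated with a matrix: `Q(A)(r,s) = Σ_{i≤r} Σ_{j≤s} a_{ij}`. -/
noncomputable def Qmat (a : ℕ → ℕ → ℝ) : ℕ → ℕ → ℝ := fun r s =>
  ∑ i ∈ Icc 1 r, ∑ j ∈ Icc 1 s, a i j

/-- Volume of the rectangle `[i,j]×[k,l]` with respect to `Q`. -/
def vol (Q : ℕ → ℕ → ℝ) (i j k l : ℕ) : ℝ := Q i k + Q j l - Q i l - Q j k

/-- `D_↘^Q(r,s) = min{0, V_Q([r,r']×[s,s']) : r < r' ≤ n, s < s' ≤ n}`. -/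
noncomputable def Dse (n : ℕ) (Q : ℕ → ℕ → ℝ) (r s : ℕ) : ℝ :=
  (Icc (r+1) n ×ˢ Icc (s+1) n).fold min 0 (fun p => vol Q r p.1 s p.2)

/-- `D_↙^Q(r,s) = min{0, V_Q([r,r']×[s',s]) : r < r' ≤ n, 0 ≤ s' < s}`. -/
noncomputable def Dsw (n : ℕ) (Q : ℕ → ℕ → ℝ) (r s : ℕ) : ℝ :=
  (Icc (r+1) n ×ˢ range s).fold min 0 (fun p => vol Q r p.1 p.2 s)

/-- `D_↖^Q(r,s) = min{0, V_Q([r',r]×[s',s]) : 0 ≤ r' < r, 0 ≤ s' < s}`. -/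
noncomputable def Dnw (n : ℕ) (Q : ℕ → ℕ → ℝ) (r s : ℕ) : ℝ :=
  (range r ×ˢ range s).fold min 0 (fun p => vol Q p.1 r p.2 s)

/-- `D_↗^Q(r,s) = min{0, V_Q([r',r]×[s,s']) : 0 ≤ r' < r, s < s' ≤ n}`. -/
noncomputable def Dne (n : ℕ) (Q : ℕ → ℕ → ℝ) (r s : ℕ) : ℝ :=
  (range r ×ˢ Icc (s+1) n).fold min 0 (fun p => vol Q p.1 r s p.2)

/-- The main defect `D_M^Q`. -/
noncomputable def DM (n : ℕ) (Q : ℕ → ℕ → ℝ) (r s : ℕ) : ℝ :=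
  min (Dse n Q r s) (Dnw n Q r s)

/-- The opposite defect `D_O^Q`. -/
noncomputable def DO (n : ℕ) (Q : ℕ → ℕ → ℝ) (r s : ℕ) : ℝ :=
  min (Dsw n Q r s) (Dne n Q r s)

/-- Boundary conditions for a function on `L_n × L_n`. -/
def DiscBoundary (n : ℕ) (P : ℕ → ℕ → ℝ) : Prop :=
  ∀ i, i ≤ n → P i 0 = 0 ∧ P 0 i = 0 ∧ P i n = i ∧ P n i = i

/-- `(P,Q)` is a discrete imprecise copula on `L_n × L_n`. -/
def DiscImpreciseCopula (n : ℕ) (P Q : ℕ → ℕ → ℝ) : Prop :=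
  DiscBoundary n P ∧ DiscBoundary n Q ∧
  ∀ i j k l, i ≤ j → j ≤ n → k ≤ l → l ≤ n →
    0 ≤ Q i k + P j l - P i l - P j k ∧
    0 ≤ P i k + Q j l - P i l - P j k ∧
    0 ≤ Q i k + Q j l - Q i l - P j k ∧
    0 ≤ Q i k + Q j l - P i l - Q j k

/-- `(P,Q)` is a self-dual discrete imprecise copula: `P_M = Q` and `Q_O = P` on `L_n × L_n`. -/
def SelfDual (n : ℕ) (P Q : ℕ → ℕ → ℝ) : Prop :=
  DiscImpreciseCopula n P Q ∧
  (∀ r, r ≤ n → ∀ s, s ≤ n → P r s - DM n P r s = Q r s) ∧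
  (∀ r, r ≤ n → ∀ s, s ≤ n → Q r s + DO n Q r s = P r s)

/-- A discrete quasi-copula (integer-range normalization) on `L_n × L_n`. -/
def DiscQuasiCopula (n : ℕ) (Q : ℕ → ℕ → ℝ) : Prop :=
  DiscBoundary n Q ∧
  (∀ i i' j, i ≤ i' → i' ≤ n → j ≤ n → Q i j ≤ Q i' j) ∧
  (∀ i j j', j ≤ j' → j' ≤ n → i ≤ n → Q i j ≤ Q i j') ∧
  (∀ i i' j j', i ≤ n → i' ≤ n → j ≤ n → j' ≤ n →
    |Q i j - Q i' j'| ≤ |(i : ℝ) - i'| + |(j : ℝ) - j'|)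

/-- A discrete copula: a discrete quasi-copula with all rectangle volumes nonnegative. -/
def DiscCopula (n : ℕ) (Q : ℕ → ℕ → ℝ) : Prop :=
  DiscQuasiCopula n Q ∧
  ∀ i j k l, i ≤ j → j ≤ n → k ≤ l → l ≤ n → 0 ≤ vol Q i j k l

/-- A permutation matrix encoded as `ℕ → ℕ → ℝ` with indices `1,…,n`. -/
def IsPermMatrix (n : ℕ) (p : ℕ → ℕ → ℝ) : Prop :=
  (∀ i j, ¬(1 ≤ i ∧ i ≤ n ∧ 1 ≤ j ∧ j ≤ n) → p i j = 0) ∧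
  (∀ i j, p i j = 0 ∨ p i j = 1) ∧
  (∀ i, 1 ≤ i → i ≤ n → ∑ j ∈ Icc 1 n, p i j = 1) ∧
  (∀ j, 1 ≤ j → j ≤ n → ∑ i ∈ Icc 1 n, p i j = 1)

/-!
Let `D` be the set of grid points at which `Q(F_n^k)` and `Q(F_n^{k-1})` differ: a diamond whose
points all have `r + s ≡ k (mod 2)`. The matrix `F_n^{k-1} - F_n^k` consists of the volumes of the
unit squares with respect to the indicator function `1_D`, so `Q(F_n^{k-1}) = Q(F_n^k) + 1_D`
by telescoping. Split `D` into its points in even rows and its points in odd rows, `D = D₀ ∪ D₁`.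
Adding to `F_n^k` the unit square volumes of `1_{D₀}` alone cancels all its entries `-1`, and
leaves a permutation matrix `P₀`; likewise `D₁` gives `P₁`. Hence `Q(P₀) = Q(F_n^k) + 1_{D₀}` and
`Q(P₁) = Q(F_n^k) + 1_{D₁}`, and as `D₀` and `D₁` partition `D`, the minimum of these two copulas
is `Q(F_n^k)` and their maximum is `Q(F_n^{k-1})`.
-/

section Volume

lemma Qmat_eq_sum_range (a : ℕ → ℕ → ℝ) (r s : ℕ) :
    Qmat a r s = ∑ i ∈ range r, ∑ j ∈ range s, a (i + 1) (j + 1) := by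
  have shift (f : ℕ → ℝ) (m : ℕ) : ∑ i ∈ Icc 1 m, f i = ∑ i ∈ range m, f (i + 1) := by
    rw [range_eq_Ico, sum_Ico_add', zero_add, Ico_add_one_right_eq_Icc]
  simp only [Qmat, shift]

lemma sum_range_vol (d : ℕ → ℕ → ℝ) (r s : ℕ) :
    ∑ i ∈ range r, ∑ j ∈ range s, vol d i (i + 1) j (j + 1) = vol d 0 r 0 s := by
  have hvol (i i' j j' : ℕ) : vol d i i' j j' = (d i' j' - d i j') - (d i' j - d i j) := by
    rw [vol]
    ring
  calc ∑ i ∈ range r, ∑ j ∈ range s, vol d i (i + 1) j (j + 1)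
      = ∑ i ∈ range r, vol d i (i + 1) 0 s := sum_congr rfl fun i _ => by
        simpa only [hvol] using sum_range_sub (fun j => d (i + 1) j - d i j) s
    _ = vol d 0 r 0 s := by
      simp only [hvol]
      rw [sum_sub_distrib, sum_range_sub fun i => d i s, sum_range_sub fun i => d i 0]

lemma Qmat_eq_Qmat_add {a b d : ℕ → ℕ → ℝ} {r s : ℕ} (hleft : ∀ t, d 0 t = 0)
    (hbot : ∀ t, d t 0 = 0)
    (h : ∀ i j, i < r → j < s →
      a (i + 1) (j + 1) - b (i + 1) (j + 1) = vol d i (i + 1) j (j + 1)) :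
    Qmat a r s = Qmat b r s + d r s := by
  have hvol : Qmat a r s - Qmat b r s = vol d 0 r 0 s := by
    simp only [Qmat_eq_sum_range, ← sum_sub_distrib, ← sum_range_vol d]
    exact sum_congr rfl fun i hi => sum_congr rfl fun j hj =>
      h i j (mem_range.1 hi) (mem_range.1 hj)
  simp only [vol, hleft, hbot] at hvol
  linarith

end Volume

section TwoIncreasing

/-- The 2-increasing property of copula theory, on the grid `L_n × L_n`: every rectangle has
nonnegative volume. It is the condition that distinguishes copulas among quasi-copulas. -/
def TwoIncreasing (n : ℕ) (Q : ℕ → ℕ → ℝ) : Prop :=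
  ∀ i j k l, i ≤ j → j ≤ n → k ≤ l → l ≤ n → 0 ≤ vol Q i j k l

variable {n : ℕ} {Q a : ℕ → ℕ → ℝ}

lemma vol_swap (Q : ℕ → ℕ → ℝ) (i j k l : ℕ) : vol (Function.swap Q) k l i j = vol Q i j k l := by
  simp only [vol, Function.swap]
  ring

lemma TwoIncreasing.swap (h : TwoIncreasing n Q) : TwoIncreasing n (Function.swap Q) :=
  fun i j k l hij hj hkl hl => vol_swap Q k l i j ▸ h k l i j hkl hl hij hj

lemma DiscBoundary.swap (h : DiscBoundary n Q) : DiscBoundary n (Function.swap Q) := fun i hi =>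
  let ⟨h₁, h₂, h₃, h₄⟩ := h i hi
  ⟨h₂, h₁, h₄, h₃⟩

lemma TwoIncreasing.mono_left (h : TwoIncreasing n Q) (hb : DiscBoundary n Q) {i i' j : ℕ}
    (hi : i ≤ i') (hi' : i' ≤ n) (hj : j ≤ n) : Q i j ≤ Q i' j := by
  have hvol := h i i' 0 j hi hi' j.zero_le hj
  rw [vol, (hb i (hi.trans hi')).1, (hb i' hi').1] at hvol
  linarith

lemma TwoIncreasing.sub_le_left (h : TwoIncreasing n Q) (hb : DiscBoundary n Q) {i i' j : ℕ}
    (hi : i ≤ i') (hi' : i' ≤ n) (hj : j ≤ n) : Q i' j - Q i j ≤ i' - i := by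
  have hvol := h i i' j n hi hi' hj le_rfl
  rw [vol, (hb i (hi.trans hi')).2.2.1, (hb i' hi').2.2.1] at hvol
  linarith

lemma TwoIncreasing.abs_sub_le_left (h : TwoIncreasing n Q) (hb : DiscBoundary n Q) {i i' j : ℕ}
    (hi : i ≤ n) (hi' : i' ≤ n) (hj : j ≤ n) : |Q i j - Q i' j| ≤ |(i : ℝ) - i'| := by
  wlog hle : i ≤ i' generalizing i i'
  · rw [abs_sub_comm, abs_sub_comm (i : ℝ)]
    exact this hi' hi (le_of_not_ge hle)
  rw [abs_sub_comm, abs_sub_comm (i : ℝ),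
    abs_of_nonneg (sub_nonneg.2 (h.mono_left hb hle hi' hj))]
  exact (h.sub_le_left hb hle hi' hj).trans (le_abs_self _)

lemma TwoIncreasing.discQuasiCopula (h : TwoIncreasing n Q) (hb : DiscBoundary n Q) :
    DiscQuasiCopula n Q := by
  refine ⟨hb, fun i i' j hi hi' hj => h.mono_left hb hi hi' hj,
    fun i j j' hj hj' hi => h.swap.mono_left hb.swap hj hj' hi, fun i i' j j' hi hi' hj hj' => ?_⟩
  calc |Q i j - Q i' j'| ≤ |Q i j - Q i' j| + |Q i' j - Q i' j'| := abs_sub_le _ _ _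
    _ ≤ |(i : ℝ) - i'| + |(j : ℝ) - j'| :=
      add_le_add (h.abs_sub_le_left hb hi hi' hj) (h.swap.abs_sub_le_left hb.swap hj hj' hi')

lemma vol_Qmat {i j k l : ℕ} (hij : i ≤ j) (hkl : k ≤ l) :
    vol (Qmat a) i j k l = ∑ x ∈ Ico i j, ∑ y ∈ Ico k l, a (x + 1) (y + 1) := by
  simp only [sum_Ico_eq_sub _ hij, sum_Ico_eq_sub _ hkl, sum_sub_distrib, vol, Qmat_eq_sum_range]
  ring

lemma twoIncreasing_Qmat (ha : ∀ i j, 0 ≤ a i j) (n : ℕ) : TwoIncreasing n (Qmat a) := by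
  intro i j k l hij _ hkl _
  rw [vol_Qmat hij hkl]
  exact sum_nonneg fun x _ => sum_nonneg fun y _ => ha _ _

end TwoIncreasing

section Matrices

variable {n : ℕ}

lemma discBoundary_Qmat {a : ℕ → ℕ → ℝ} (hrow : ∀ i, 1 ≤ i → i ≤ n → ∑ j ∈ Icc 1 n, a i j = 1)
    (hcol : ∀ j, 1 ≤ j → j ≤ n → ∑ i ∈ Icc 1 n, a i j = 1) : DiscBoundary n (Qmat a) := by
  have sum_ones {f : ℕ → ℝ} (hf : ∀ i, 1 ≤ i → i ≤ n → f i = 1) {m : ℕ} (hm : m ≤ n) :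
      ∑ i ∈ Icc 1 m, f i = m := by
    rw [sum_congr rfl fun i hi => hf i (mem_Icc.1 hi).1 ((mem_Icc.1 hi).2.trans hm)]
    simp
  refine fun m hm => ⟨by simp [Qmat], by simp [Qmat], sum_ones hrow hm, ?_⟩
  rw [Qmat, sum_comm]
  exact sum_ones hcol hm

lemma discCopula_Qmat_of_nonneg {a : ℕ → ℕ → ℝ} (ha : ∀ i j, 0 ≤ a i j)
    (hrow : ∀ i, 1 ≤ i → i ≤ n → ∑ j ∈ Icc 1 n, a i j = 1)
    (hcol : ∀ j, 1 ≤ j → j ≤ n → ∑ i ∈ Icc 1 n, a i j = 1) : DiscCopula n (Qmat a) :=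
  have h := twoIncreasing_Qmat ha n
  ⟨h.discQuasiCopula (discBoundary_Qmat hrow hcol), h⟩

lemma IsPermMatrix.discCopula_Qmat {p : ℕ → ℕ → ℝ} (hp : IsPermMatrix n p) :
    DiscCopula n (Qmat p) := by
  obtain ⟨-, h01, hrow, hcol⟩ := hp
  refine discCopula_Qmat_of_nonneg (fun i j => ?_) hrow hcol
  rcases h01 i j with h | h <;> simp [h]

/-- The `n × n` matrix of a map `σ` of `{1, …, n}`: row `i` has its entry `1` in column `σ i`. -/
noncomputable def graphMatrix (n : ℕ) (σ : ℕ → ℕ) : ℕ → ℕ → ℝ := fun i j =>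
  if (1 ≤ i ∧ i ≤ n) ∧ (1 ≤ j ∧ j ≤ n) ∧ σ i = j then 1 else 0

lemma graphMatrix_apply {σ : ℕ → ℕ} {i j : ℕ} (hi : i ∈ Set.Icc 1 n) (hj : j ∈ Set.Icc 1 n) :
    graphMatrix n σ i j = if σ i = j then 1 else 0 :=
  if_congr ⟨fun h => h.2.2, fun h => ⟨hi, hj, h⟩⟩ rfl rfl

lemma isPermMatrix_graphMatrix {σ : ℕ → ℕ} (hσ : Set.BijOn σ (Set.Icc 1 n) (Set.Icc 1 n)) :
    IsPermMatrix n (graphMatrix n σ) := by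
  refine ⟨fun i j h => if_neg (by tauto), fun i j => ?_, fun i hi hin => ?_, fun j hj hjn => ?_⟩
  · exact (ite_eq_or_eq _ 1 0).symm
  · have hσi := hσ.mapsTo ⟨hi, hin⟩
    rw [sum_eq_single_of_mem (σ i) (mem_Icc.2 hσi)]
    · exact if_pos ⟨⟨hi, hin⟩, hσi, rfl⟩
    · exact fun j _ hj => if_neg fun h => hj h.2.2.symm
  · obtain ⟨i, hi, rfl⟩ := hσ.surjOn ⟨hj, hjn⟩
    rw [sum_eq_single_of_mem i (mem_Icc.2 hi)]
    · exact if_pos ⟨hi, ⟨hj, hjn⟩, rfl⟩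
    · exact fun i' _ hi' => if_neg fun h => hi' (hσ.injOn h.1 hi h.2.2)

end Matrices

section Coherence

/-- The set of values at `(r, s)` of the discrete copulas lying between `P` and `Q` on
`L_n × L_n`. Coherence of `(P, Q)` says that its infimum is `P r s` and its supremum `Q r s`. -/
def copulaValuesBetween (n : ℕ) (P Q : ℕ → ℕ → ℝ) (r s : ℕ) : Set ℝ :=
  {x | ∃ C : ℕ → ℕ → ℝ, DiscCopula n C ∧
    (∀ r' s', r' ≤ n → s' ≤ n → P r' s' ≤ C r' s' ∧ C r' s' ≤ Q r' s') ∧ x = C r s}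

variable {n : ℕ} {P Q C₁ C₂ : ℕ → ℕ → ℝ}

lemma mem_copulaValuesBetween {C : ℕ → ℕ → ℝ} (hC : DiscCopula n C)
    (hP : ∀ r s, r ≤ n → s ≤ n → P r s ≤ C r s) (hQ : ∀ r s, r ≤ n → s ≤ n → C r s ≤ Q r s)
    (r s : ℕ) : C r s ∈ copulaValuesBetween n P Q r s :=
  ⟨C, hC, fun r s hr hs => ⟨hP r s hr hs, hQ r s hr hs⟩, rfl⟩

theorem isLeast_isGreatest_copulaValuesBetween (h₁ : DiscCopula n C₁) (h₂ : DiscCopula n C₂)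
    (h : ∀ r s, r ≤ n → s ≤ n →
      P r s = min (C₁ r s) (C₂ r s) ∧ Q r s = max (C₁ r s) (C₂ r s))
    {r s : ℕ} (hr : r ≤ n) (hs : s ≤ n) :
    IsLeast (copulaValuesBetween n P Q r s) (P r s) ∧
      IsGreatest (copulaValuesBetween n P Q r s) (Q r s) := by
  have hC₁ : C₁ r s ∈ copulaValuesBetween n P Q r s :=
    mem_copulaValuesBetween h₁ (fun r s hr hs => (h r s hr hs).1.trans_le (min_le_left _ _))
      (fun r s hr hs => (le_max_left _ _).trans_eq (h r s hr hs).2.symm) r s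
  have hC₂ : C₂ r s ∈ copulaValuesBetween n P Q r s :=
    mem_copulaValuesBetween h₂ (fun r s hr hs => (h r s hr hs).1.trans_le (min_le_right _ _))
      (fun r s hr hs => (le_max_right _ _).trans_eq (h r s hr hs).2.symm) r s
  constructor
  · refine ⟨(h r s hr hs).1 ▸ min_rec' (· ∈ _) hC₁ hC₂, ?_⟩
    rintro _ ⟨C, -, hC, rfl⟩
    exact (hC r s hr hs).1
  · refine ⟨(h r s hr hs).2 ▸ max_rec' (· ∈ _) hC₁ hC₂, ?_⟩
    rintro _ ⟨C, -, hC, rfl⟩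
    exact (hC r s hr hs).2

end Coherence

section Diamond

variable {n k : ℕ}

lemma Fmat_apply (n k i j : ℕ) :
    Fmat n k i j = if k + 1 ≤ i + j ∧ i + j + k ≤ 2 * n + 1 ∧ i < j + k ∧ j < i + k
      then if (i + j) % 2 = (k + 1) % 2 then 1 else -1 else 0 := by
  have hsupp : (k + 1 ≤ i + j ∧ (i : ℤ) + j ≤ 2 * n - k + 1 ∧ |(i : ℤ) - j| ≤ (k : ℤ) - 1) ↔
      k + 1 ≤ i + j ∧ i + j + k ≤ 2 * n + 1 ∧ i < j + k ∧ j < i + k := by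
    rw [abs_le]
    omega
  simp only [Fmat, hsupp, neg_one_pow_eq_ite, Nat.even_iff]
  refine ite_congr rfl (fun h => if_congr ?_ rfl rfl) fun _ => rfl
  omega

/-- The indicator function of the grid points at which `Q(F_n^k)` and `Q(F_n^{k-1})` differ:
`r + s ≡ k (mod 2)`, `k ≤ r + s ≤ 2 n - k` and `|r - s| ≤ k - 2`, written without subtraction. -/
noncomputable def diamond (n k : ℕ) : ℕ → ℕ → ℝ := fun r s =>
  if (r + s) % 2 = k % 2 ∧ k ≤ r + s ∧ r + s + k ≤ 2 * n ∧ r + 2 ≤ s + k ∧ s + 2 ≤ r + k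
  then 1 else 0

lemma diamond_zero_left (n k s : ℕ) : diamond n k 0 s = 0 :=
  if_neg (by omega)

lemma diamond_zero_right (n k r : ℕ) : diamond n k r 0 = 0 :=
  if_neg (by omega)

lemma diamond_nonneg (n k r s : ℕ) : 0 ≤ diamond n k r s :=
  ite_nonneg zero_le_one le_rfl

lemma diamond_eq_zero_of_mod_ne {r s : ℕ} (h : (r + s) % 2 ≠ k % 2) : diamond n k r s = 0 :=
  if_neg fun h' => h h'.1

-- A unit square has exactly one pair of opposite corners of the parity of `diamond n k`. Its entry
-- in one of `F_n^k`, `F_n^{k-1}` is nonzero when either of them lies in the diamond, its entry in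
-- the other when both do.
lemma Fmat_of_mod_eq {i j : ℕ} (hk : 2 ≤ k) (hkn : k ≤ n) (h : (i + j) % 2 = k % 2) :
    Fmat n k (i + 1) (j + 1) = -min (diamond n k i j) (diamond n k (i + 1) (j + 1)) ∧
      Fmat n (k - 1) (i + 1) (j + 1) = max (diamond n k i j) (diamond n k (i + 1) (j + 1)) := by
  simp only [Fmat_apply, diamond, min_def, max_def]
  constructor <;> grind

lemma Fmat_of_mod_ne {i j : ℕ} (hk : 2 ≤ k) (h : (i + j) % 2 ≠ k % 2) :
    Fmat n k (i + 1) (j + 1) = max (diamond n k i (j + 1)) (diamond n k (i + 1) j) ∧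
      Fmat n (k - 1) (i + 1) (j + 1) = -min (diamond n k i (j + 1)) (diamond n k (i + 1) j) := by
  simp only [Fmat_apply, diamond, min_def, max_def]
  constructor <;> grind

lemma Fmat_pred_sub_Fmat (hk : 2 ≤ k) (hkn : k ≤ n) (i j : ℕ) :
    Fmat n (k - 1) (i + 1) (j + 1) - Fmat n k (i + 1) (j + 1) =
      vol (diamond n k) i (i + 1) j (j + 1) := by
  by_cases h : (i + j) % 2 = k % 2
  · rw [(Fmat_of_mod_eq hk hkn h).1, (Fmat_of_mod_eq hk hkn h).2, sub_neg_eq_add,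
      max_add_min, vol, diamond_eq_zero_of_mod_ne (r := i) (s := j + 1) (by omega),
      diamond_eq_zero_of_mod_ne (r := i + 1) (s := j) (by omega), sub_zero, sub_zero]
  · rw [(Fmat_of_mod_ne hk h).1, (Fmat_of_mod_ne hk h).2, vol,
      diamond_eq_zero_of_mod_ne (r := i) (s := j) (by omega),
      diamond_eq_zero_of_mod_ne (r := i + 1) (s := j + 1) (by omega)]
    linarith [max_add_min (diamond n k i (j + 1)) (diamond n k (i + 1) j)]

lemma Qmat_Fmat_pred (hk : 2 ≤ k) (hkn : k ≤ n) (r s : ℕ) :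
    Qmat (Fmat n (k - 1)) r s = Qmat (Fmat n k) r s + diamond n k r s :=
  Qmat_eq_Qmat_add (diamond_zero_left n k) (diamond_zero_right n k)
    fun i j _ _ => Fmat_pred_sub_Fmat hk hkn i j

end Diamond

section DiamondPerm

/-- The permutations of `{1, …, n}` whose matrices generate the two extremal copulas. The entries
lie on the four lines `i + j = k`, `i - j = k - 1`, `j - i = k - 1`, `i + j = 2 n - k + 2`: on the
first two in the rows congruent to `e` modulo `2`, on the last two in the other rows. -/
def diamondPerm (n k e i : ℕ) : ℕ :=
  if i % 2 = e % 2 then if i < k then k - i else i + 1 - k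
  else if i + k ≤ n + 1 then i + k - 1 else 2 * n + 2 - k - i

variable {n k : ℕ}

lemma diamondPerm_eq_iff_of_mod_eq {e i j : ℕ} (hie : i % 2 = e % 2) (hj : 1 ≤ j) :
    diamondPerm n k e i = j ↔ i + j = k ∨ i + 1 = j + k := by
  rw [diamondPerm, if_pos hie]
  split_ifs <;> omega

lemma diamondPerm_eq_iff_of_mod_ne {e i j : ℕ} (hie : i % 2 ≠ e % 2) (hj : 1 ≤ j)
    (hjn : j ≤ n) :
    diamondPerm n k e i = j ↔ j + 1 = i + k ∨ i + j + k = 2 * n + 2 := by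
  rw [diamondPerm, if_neg hie]
  split_ifs <;> omega

lemma diamondPerm_mapsTo (e : ℕ) (hk : 1 ≤ k) (hkn : k ≤ n) :
    Set.MapsTo (diamondPerm n k e) (Set.Icc 1 n) (Set.Icc 1 n) := by
  rintro i ⟨hi, hin⟩
  rw [Set.mem_Icc, diamondPerm]
  split_ifs <;> omega

lemma diamondPerm_diamondPerm {e e' i : ℕ} (he : e' % 2 = (e + k) % 2) (hk : 1 ≤ k)
    (hkn : k ≤ n) (hi : i ∈ Set.Icc 1 n) :
    diamondPerm n k e' (diamondPerm n k e i) = i := by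
  rw [Set.mem_Icc] at hi
  simp only [diamondPerm]
  split_ifs <;> omega

lemma diamondPerm_bijOn (e : ℕ) (hk : 1 ≤ k) (hkn : k ≤ n) :
    Set.BijOn (diamondPerm n k e) (Set.Icc 1 n) (Set.Icc 1 n) :=
  Set.InvOn.bijOn (f' := diamondPerm n k (e + k))
    ⟨fun _ hi => diamondPerm_diamondPerm rfl hk hkn hi,
      fun _ hi => diamondPerm_diamondPerm (by omega) hk hkn hi⟩
    (diamondPerm_mapsTo e hk hkn) (diamondPerm_mapsTo (e + k) hk hkn)

/-- The part of `diamond n k` in the rows congruent to `e` modulo `2`. -/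
noncomputable def diamondRows (n k e : ℕ) : ℕ → ℕ → ℝ := fun r s =>
  if r % 2 = e % 2 then diamond n k r s else 0

lemma diamondRows_zero_left (n k e s : ℕ) : diamondRows n k e 0 s = 0 := by
  rw [diamondRows, diamond_zero_left, ite_self]

lemma diamondRows_zero_right (n k e r : ℕ) : diamondRows n k e r 0 = 0 := by
  rw [diamondRows, diamond_zero_right, ite_self]

lemma diamondRows_eq_zero_of_mod_ne {e r s : ℕ} (h : (r + s) % 2 ≠ k % 2) :
    diamondRows n k e r s = 0 := by
  rw [diamondRows, diamond_eq_zero_of_mod_ne h, ite_self]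

lemma min_diamondRows (n k r s : ℕ) :
    min (diamondRows n k 0 r s) (diamondRows n k 1 r s) = 0 := by
  rcases Nat.mod_two_eq_zero_or_one r with h | h <;>
    simp [diamondRows, h, diamond_nonneg]

lemma max_diamondRows (n k r s : ℕ) :
    max (diamondRows n k 0 r s) (diamondRows n k 1 r s) = diamond n k r s := by
  rcases Nat.mod_two_eq_zero_or_one r with h | h <;>
    simp [diamondRows, h, diamond_nonneg]

lemma graphMatrix_diamondPerm_of_mod_eq {i j : ℕ} (e : ℕ) (hkn : k ≤ n) (hi : i < n)
    (hj : j < n) (h : (i + j) % 2 = k % 2) :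
    graphMatrix n (diamondPerm n k e) (i + 1) (j + 1) =
      diamondRows n k e i j + diamondRows n k e (i + 1) (j + 1) -
        min (diamond n k i j) (diamond n k (i + 1) (j + 1)) := by
  rw [graphMatrix_apply ⟨i.succ_pos, hi⟩ ⟨j.succ_pos, hj⟩]
  by_cases hie : i % 2 = e % 2
  · have hie' : (i + 1) % 2 ≠ e % 2 := by omega
    rw [if_congr (diamondPerm_eq_iff_of_mod_ne hie' j.succ_pos hj) rfl rfl]
    simp only [diamondRows, hie, hie', if_true, if_false, diamond, min_def]
    grind
  · have hie' : (i + 1) % 2 = e % 2 := by omega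
    rw [if_congr (diamondPerm_eq_iff_of_mod_eq hie' j.succ_pos) rfl rfl]
    simp only [diamondRows, hie, hie', if_true, if_false, diamond, min_def]
    grind

lemma graphMatrix_diamondPerm_of_mod_ne {i j : ℕ} (e : ℕ) (hk : 2 ≤ k) (hi : i < n)
    (hj : j < n) (h : (i + j) % 2 ≠ k % 2) :
    graphMatrix n (diamondPerm n k e) (i + 1) (j + 1) =
      max (diamond n k i (j + 1)) (diamond n k (i + 1) j) -
        (diamondRows n k e i (j + 1) + diamondRows n k e (i + 1) j) := by
  rw [graphMatrix_apply ⟨i.succ_pos, hi⟩ ⟨j.succ_pos, hj⟩]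
  by_cases hie : i % 2 = e % 2
  · have hie' : (i + 1) % 2 ≠ e % 2 := by omega
    rw [if_congr (diamondPerm_eq_iff_of_mod_ne hie' j.succ_pos hj) rfl rfl]
    simp only [diamondRows, hie, hie', if_true, if_false, diamond, max_def]
    grind
  · have hie' : (i + 1) % 2 = e % 2 := by omega
    rw [if_congr (diamondPerm_eq_iff_of_mod_eq hie' j.succ_pos) rfl rfl]
    simp only [diamondRows, hie, hie', if_true, if_false, diamond, max_def]
    grind

lemma graphMatrix_sub_Fmat {i j : ℕ} (e : ℕ) (hk : 2 ≤ k) (hkn : k ≤ n) (hi : i < n) (hj : j < n) :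
    graphMatrix n (diamondPerm n k e) (i + 1) (j + 1) - Fmat n k (i + 1) (j + 1) =
      vol (diamondRows n k e) i (i + 1) j (j + 1) := by
  by_cases h : (i + j) % 2 = k % 2
  · rw [graphMatrix_diamondPerm_of_mod_eq e hkn hi hj h, (Fmat_of_mod_eq hk hkn h).1, vol,
      diamondRows_eq_zero_of_mod_ne (r := i) (s := j + 1) (by omega),
      diamondRows_eq_zero_of_mod_ne (r := i + 1) (s := j) (by omega)]
    ring
  · rw [graphMatrix_diamondPerm_of_mod_ne e hk hi hj h, (Fmat_of_mod_ne hk h).1, vol,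
      diamondRows_eq_zero_of_mod_ne (r := i) (s := j) (by omega),
      diamondRows_eq_zero_of_mod_ne (r := i + 1) (s := j + 1) (by omega)]
    ring

lemma Qmat_graphMatrix_diamondPerm (e : ℕ) (hk : 2 ≤ k) (hkn : k ≤ n) {r s : ℕ} (hr : r ≤ n)
    (hs : s ≤ n) :
    Qmat (graphMatrix n (diamondPerm n k e)) r s = Qmat (Fmat n k) r s + diamondRows n k e r s :=
  Qmat_eq_Qmat_add (diamondRows_zero_left n k e) (diamondRows_zero_right n k e)
    fun _ _ hi hj => graphMatrix_sub_Fmat e hk hkn (hi.trans_le hr) (hj.trans_le hs)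

theorem Qmat_Fmat_eq_min_max (hk : 2 ≤ k) (hkn : k ≤ n) {r s : ℕ} (hr : r ≤ n) (hs : s ≤ n) :
    Qmat (Fmat n k) r s = min (Qmat (graphMatrix n (diamondPerm n k 0)) r s)
        (Qmat (graphMatrix n (diamondPerm n k 1)) r s) ∧
      Qmat (Fmat n (k - 1)) r s = max (Qmat (graphMatrix n (diamondPerm n k 0)) r s)
        (Qmat (graphMatrix n (diamondPerm n k 1)) r s) := by
  simp only [Qmat_graphMatrix_diamondPerm _ hk hkn hr hs, min_add_add_left, max_add_add_left,
    min_diamondRows, max_diamondRows, Qmat_Fmat_pred hk hkn, add_zero, and_self]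

end DiamondPerm

theorem QFk_coherent_general (n k : ℕ) (hk : 2 ≤ k) (hkn : k ≤ n) :
    (∃ C₁ C₂ : ℕ → ℕ → ℝ,
      DiscCopula n C₁ ∧ DiscCopula n C₂ ∧
      (∃ P₁, IsPermMatrix n P₁ ∧ C₁ = Qmat P₁) ∧
      (∃ P₂, IsPermMatrix n P₂ ∧ C₂ = Qmat P₂) ∧
      (∀ r s, r ≤ n → s ≤ n →
        Qmat (Fmat n k) r s = min (C₁ r s) (C₂ r s) ∧
        Qmat (Fmat n (k - 1)) r s = max (C₁ r s) (C₂ r s))) ∧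
    (∀ r s, r ≤ n → s ≤ n →
      IsLeast (copulaValuesBetween n (Qmat (Fmat n k)) (Qmat (Fmat n (k - 1))) r s)
        (Qmat (Fmat n k) r s) ∧
      IsGreatest (copulaValuesBetween n (Qmat (Fmat n k)) (Qmat (Fmat n (k - 1))) r s)
        (Qmat (Fmat n (k - 1)) r s)) := by
  have hperm (e : ℕ) : IsPermMatrix n (graphMatrix n (diamondPerm n k e)) :=
    isPermMatrix_graphMatrix (diamondPerm_bijOn e (by omega) hkn)
  have hminmax (r s : ℕ) (hr : r ≤ n) (hs : s ≤ n) := Qmat_Fmat_eq_min_max hk hkn hr hs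
  exact ⟨⟨_, _, (hperm 0).discCopula_Qmat, (hperm 1).discCopula_Qmat, ⟨_, hperm 0, rfl⟩,
    ⟨_, hperm 1, rfl⟩, hminmax⟩, fun r s => isLeast_isGreatest_copulaValuesBetween
      (hperm 0).discCopula_Qmat (hperm 1).discCopula_Qmat hminmax⟩

/-- For every `n ≥ 4` and `3 ≤ k ≤ n−1`, there are two discrete copulas
`C₁, C₂` (each corresponding to a permutation matrix) whose pointwise min is `Q(F_n^k)`
and pointwise max is `Q(F_n^{k−1})`; consequently `(Q(F_n^k), Q(F_n^{k−1}))` is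
coherent: `Q(F_n^k)(r,s)` is the infimum and `Q(F_n^{k−1})(r,s)` the supremum of
`C(r,s)` over all discrete copulas sandwiched between them. -/
theorem QFk_coherent (n k : ℕ) (hn : 4 ≤ n) (hk1 : 3 ≤ k) (hk2 : k ≤ n - 1) :
    (∃ C₁ C₂ : ℕ → ℕ → ℝ,
      DiscCopula n C₁ ∧ DiscCopula n C₂ ∧
      (∃ P₁, IsPermMatrix n P₁ ∧ C₁ = Qmat P₁) ∧
      (∃ P₂, IsPermMatrix n P₂ ∧ C₂ = Qmat P₂) ∧
      (∀ r s, r ≤ n → s ≤ n →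
        Qmat (Fmat n k) r s = min (C₁ r s) (C₂ r s) ∧
        Qmat (Fmat n (k - 1)) r s = max (C₁ r s) (C₂ r s))) ∧
    (∀ r s, r ≤ n → s ≤ n →
      IsGLB {x : ℝ | ∃ C : ℕ → ℕ → ℝ, DiscCopula n C ∧
          (∀ r' s', r' ≤ n → s' ≤ n →
            Qmat (Fmat n k) r' s' ≤ C r' s' ∧ C r' s' ≤ Qmat (Fmat n (k - 1)) r' s') ∧
          x = C r s}
        (Qmat (Fmat n k) r s) ∧
      IsLUB {x : ℝ | ∃ C : ℕ → ℕ → ℝ, DiscCopula n C ∧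
          (∀ r' s', r' ≤ n → s' ≤ n →
            Qmat (Fmat n k) r' s' ≤ C r' s' ∧ C r' s' ≤ Qmat (Fmat n (k - 1)) r' s') ∧
          x = C r s}
        (Qmat (Fmat n (k - 1)) r s)) :=
  have ⟨hminmax, hcoh⟩ := QFk_coherent_general n k (by omega) (by omega)
  ⟨hminmax, fun r s hr hs => ⟨(hcoh r s hr hs).1.isGLB, (hcoh r s hr hs).2.isLUB⟩⟩
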